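/- arXiv:1507.01208 — 3 statements merged into one kernel-verified Lean document; each statement's English description precedes it below -/
import Mathlib

section
/- Let L be a type, δ a diversity on L, and Γ a nonempty finite subset of L with cardinality |Γ|. Then δ(Γ) ≤ (|Γ| − 1) · δ^dia(Γ). -/
/-- A diversity on a type `L`. -/
structure Diversity (L : Type*) [DecidableEq L] where
  δ : Finset L → ℝ
  nonneg : ∀ Γ : Finset L, 0 ≤ δ Γ
  eq_zero_iff : ∀ Γ : Finset L, δ Γ = 0 ↔ Γ.card ≤ 1
  mono : ∀ ⦃Γ₁ Γ₂ : Finset L⦄, Γ₁ ⊆ Γ₂ → δ Γ₁ ≤ δ Γ₂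
  triangle : ∀ Γ₁ Γ₂ Γ₃ : Finset L, Γ₂.Nonempty →
    δ (Γ₁ ∪ Γ₃) ≤ δ (Γ₁ ∪ Γ₂) + δ (Γ₂ ∪ Γ₃)

/-- The diameter diversity of a diversity `D`:
`δᵈⁱᵃ(Γ) = max_{i,j ∈ Γ} δ({i,j})` for nonempty `Γ`, and `0` on the empty set. -/
noncomputable def diaDiversity {L : Type*} [DecidableEq L] (D : Diversity L)
    (Γ : Finset L) : ℝ :=
  if h : Γ.Nonempty then (Γ ×ˢ Γ).sup' (h.product h) (fun p => D.δ {p.1, p.2}) else 0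

/-!
A diversity is bounded by the weight of any star: adding the points of `Γ` one at a time to a
centre `b` costs at most `δ {b, i}` for each new point `i`, by the triangle inequality through
`{b}`. When `b ∈ Γ` the star has `|Γ| - 1` edges, each of weight at most the diameter of `Γ`.
-/

namespace Diversity

variable {L : Type*} [DecidableEq L] (D : Diversity L)

theorem δ_singleton (a : L) : D.δ {a} = 0 :=
  (D.eq_zero_iff {a}).2 (Finset.card_singleton a).le

theorem δ_insert_le_sum (b : L) (s : Finset L) : D.δ (insert b s) ≤ ∑ i ∈ s, D.δ {b, i} := by
  induction s using Finset.induction_on with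
  | empty => simp [δ_singleton]
  | insert a s ha ih =>
    calc
      D.δ (insert b (insert a s)) = D.δ ({a} ∪ insert b s) := by
        rw [Finset.insert_comm, Finset.insert_eq a]
      _ ≤ D.δ ({a} ∪ {b}) + D.δ ({b} ∪ insert b s) :=
        D.triangle {a} {b} (insert b s) (Finset.singleton_nonempty b)
      _ = D.δ {b, a} + D.δ (insert b s) := by
        rw [← Finset.insert_eq, Finset.pair_comm, ← Finset.insert_eq, Finset.insert_idem]
      _ ≤ D.δ {b, a} + ∑ i ∈ s, D.δ {b, i} := by gcongr
      _ = ∑ i ∈ insert a s, D.δ {b, i} := by rw [Finset.sum_insert ha]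

theorem δ_pair_le_diaDiversity {Γ : Finset L} {i j : L} (hi : i ∈ Γ) (hj : j ∈ Γ) :
    D.δ {i, j} ≤ diaDiversity D Γ := by
  rw [diaDiversity, dif_pos ⟨i, hi⟩]
  exact Finset.le_sup' (fun p : L × L => D.δ {p.1, p.2}) (Finset.mk_mem_product hi hj)

end Diversity

/-- for a nonempty finite `Γ`, `δ(Γ) ≤ (|Γ| - 1) · δᵈⁱᵃ(Γ)`. -/
theorem diversity_le_card_mul_dia {L : Type*} [DecidableEq L] (D : Diversity L)
    (Γ : Finset L) (hΓ : Γ.Nonempty) :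
    D.δ Γ ≤ ((Γ.card : ℝ) - 1) * diaDiversity D Γ := by
  obtain ⟨b, hb⟩ := hΓ
  calc
    D.δ Γ = D.δ (insert b (Γ.erase b)) := by rw [Finset.insert_erase hb]
    _ ≤ ∑ i ∈ Γ.erase b, D.δ {b, i} := D.δ_insert_le_sum b (Γ.erase b)
    _ ≤ (Γ.erase b).card • diaDiversity D Γ :=
      Finset.sum_le_card_nsmul _ _ _ fun _ hi =>
        D.δ_pair_le_diaDiversity hb (Finset.mem_of_mem_erase hi)
    _ = ((Γ.card : ℝ) - 1) * diaDiversity D Γ := by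
      rw [nsmul_eq_mul, Finset.cast_card_erase_of_mem hb]
end

section
/- Let V be a finite nonempty set of variables, L a finite nonempty set of labels, θ : V → L → ℝ arbitrary unary potentials, and C a finite family of nonempty finite subsets of V (cliques). Fix γ : L → ℝ and γmax ∈ ℝ with 0 < γ(l) < γmax for all l ∈ L, and define for a labeling x : V → L and clique c ∈ C the P^n Potts potential θ_c(x) = γ(l) if x(i) = l for all i ∈ c, and θ_c(x) = γmax otherwise. Let E(x) = Σ_{i ∈ V} θ(i, x(i)) + Σ_{c ∈ C} θ_c(x), let M = max_{c ∈ C} |c|, γmin = min_{l ∈ L} γ(l), and λ = γmax/γmin. Suppose x̂ : V → L is a local optimum with respect to expansion moves, i.e. for every α ∈ L and every x' : V → L such that x'(i) ∈ {x̂(i), α} for all i ∈ V, we have E(x̂) ≤ E(x'). Then for every labeling x* : V → L: Σ_{i ∈ V} θ(i, x̂(i)) + Σ_{c ∈ C} θ_c(x̂) ≤ Σ_{i ∈ V} θ(i, x*(i)) + λ · min(M, |L|) · Σ_{c ∈ C} θ_c(x*). -/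
open Classical in
/-- The `Pⁿ` Potts clique potential: if all variables of the clique `c` take a
common label `l` under `x`, the cost is `γ l`; otherwise it is `γmax`. -/
noncomputable def pottsPot {V L : Type*} (γ : L → ℝ) (γmax : ℝ)
    (c : Finset V) (x : V → L) : ℝ :=
  if h : ∃ l : L, ∀ i ∈ c, x i = l then γ (Classical.choose h) else γmax

/-- The energy of a labeling under unary potentials `θ` and `Pⁿ` Potts clique
potentials over the clique family `C`. -/
noncomputable def pottsEnergy {V L : Type*} [Fintype V] (θ : V → L → ℝ)
    (γ : L → ℝ) (γmax : ℝ) (C : Finset (Finset V)) (x : V → L) : ℝ :=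
  ∑ i, θ i (x i) + ∑ c ∈ C, pottsPot γ γmax c x

/-!
Given a locally optimal `x` and any labeling `y`, compare `x`, for every label `a` used by `y`, with
the expansion move that relabels the set `{i | y i = a}` by `a`. These sets partition `V`, so the
unary changes add up to the passage from `x` to `y`. A clique `c` is affected only by the labels in
`y(c)`, and after such a move it costs at most its cost under `y`: either `y` is constant on `c` and
the move copies `y` there, or `y` already pays `γmax`. Summing the optimality inequalities therefore
charges each clique its cost under `y` at most `#(y(c)) ≤ min(M, |L|)` times.
-/

section PottsPot

variable {V L : Type*} {γ : L → ℝ} {γmax : ℝ} {c : Finset V} {x y : V → L}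

lemma pottsPot_of_not_exists_forall_eq (h : ¬∃ l, ∀ i ∈ c, x i = l) :
    pottsPot γ γmax c x = γmax :=
  dif_neg h

open Classical in
lemma pottsPot_congr (h : ∀ i ∈ c, x i = y i) : pottsPot γ γmax c x = pottsPot γ γmax c y := by
  have hconst : (fun l ↦ ∀ i ∈ c, x i = l) = fun l ↦ ∀ i ∈ c, y i = l :=
    funext fun l ↦ propext (forall₂_congr fun i hi ↦ by rw [h i hi])
  exact congrArg (fun p : L → Prop ↦ if hp : ∃ l, p l then γ hp.choose else γmax) hconst

lemma pottsPot_le (hγ : ∀ l, γ l ≤ γmax) : pottsPot γ γmax c x ≤ γmax := by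
  unfold pottsPot
  split_ifs
  exacts [hγ _, le_rfl]

lemma pottsPot_nonneg (hγ₀ : ∀ l, 0 ≤ γ l) (hγ : ∀ l, γ l ≤ γmax) (hc : c.Nonempty) :
    0 ≤ pottsPot γ γmax c x := by
  obtain ⟨i, -⟩ := hc
  unfold pottsPot
  split_ifs
  exacts [hγ₀ _, (hγ₀ (x i)).trans (hγ (x i))]

end PottsPot

section Expansion

variable {V L : Type*} [DecidableEq L]

/-- The expansion move from `x` with respect to the label `a` that relabels exactly the variables
to which the target labeling `y` assigns `a`. -/
def expandToward (x y : V → L) (a : L) : V → L :=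
  fun i ↦ if y i = a then a else x i

variable {x y : V → L} {a : L} {i : V}

lemma expandToward_of_eq (h : y i = a) : expandToward x y a i = y i := by
  rw [expandToward, if_pos h, h]

lemma expandToward_of_ne (h : y i ≠ a) : expandToward x y a i = x i :=
  if_neg h

lemma expandToward_eq_or_eq (x y : V → L) (a : L) (i : V) :
    expandToward x y a i = x i ∨ expandToward x y a i = a :=
  (ite_eq_or_eq _ _ _).symm

lemma sum_expandToward_sub {A : Type*} [AddCommGroup A] (f : L → A) {S : Finset L}
    (hi : y i ∈ S) :
    ∑ a ∈ S, (f (expandToward x y a i) - f (x i)) = f (y i) - f (x i) := by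
  rw [Finset.sum_eq_single_of_mem (y i) hi, expandToward_of_eq rfl]
  intro a _ ha
  rw [expandToward_of_ne ha.symm, sub_self]

variable {γ : L → ℝ} {γmax : ℝ} {c : Finset V}

lemma pottsPot_expandToward_of_notMem_image (ha : a ∉ c.image y) :
    pottsPot γ γmax c (expandToward x y a) = pottsPot γ γmax c x :=
  pottsPot_congr fun _ hi ↦
    expandToward_of_ne fun h ↦ ha (Finset.mem_image.2 ⟨_, hi, h⟩)

lemma pottsPot_expandToward_le (hγ : ∀ l, γ l ≤ γmax) (ha : a ∈ c.image y) :
    pottsPot γ γmax c (expandToward x y a) ≤ pottsPot γ γmax c y := by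
  by_cases hy : ∃ l, ∀ i ∈ c, y i = l
  · obtain ⟨l, hl⟩ := hy
    obtain ⟨j, hj, rfl⟩ := Finset.mem_image.1 ha
    exact (pottsPot_congr fun i hi ↦ expandToward_of_eq ((hl i hi).trans (hl j hj).symm)).le
  · rw [pottsPot_of_not_exists_forall_eq hy]
    exact pottsPot_le hγ

lemma sum_pottsPot_expandToward_sub_le (hγ₀ : ∀ l, 0 ≤ γ l) (hγ : ∀ l, γ l ≤ γmax)
    (hc : c.Nonempty) {S : Finset L} (hS : c.image y ⊆ S) :
    ∑ a ∈ S, (pottsPot γ γmax c (expandToward x y a) - pottsPot γ γmax c x) ≤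
      (c.image y).card * pottsPot γ γmax c y - pottsPot γ γmax c x := by
  have hcard : (1 : ℝ) ≤ (c.image y).card := by exact_mod_cast (hc.image y).card_pos
  calc ∑ a ∈ S, (pottsPot γ γmax c (expandToward x y a) - pottsPot γ γmax c x)
    _ = ∑ a ∈ c.image y, (pottsPot γ γmax c (expandToward x y a) - pottsPot γ γmax c x) :=
      (Finset.sum_subset hS fun a _ ha ↦ by
        rw [pottsPot_expandToward_of_notMem_image ha, sub_self]).symm
    _ ≤ ∑ _a ∈ c.image y, (pottsPot γ γmax c y - pottsPot γ γmax c x) := by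
      gcongr with a ha
      exact pottsPot_expandToward_le hγ ha
    _ = (c.image y).card * pottsPot γ γmax c y - (c.image y).card * pottsPot γ γmax c x := by
      rw [Finset.sum_const, nsmul_eq_mul, mul_sub]
    _ ≤ (c.image y).card * pottsPot γ γmax c y - pottsPot γ γmax c x := by
      gcongr
      exact le_mul_of_one_le_left (pottsPot_nonneg hγ₀ hγ hc) hcard

end Expansion

section Energy

variable {V L : Type*} [Fintype V] {θ : V → L → ℝ} {γ : L → ℝ} {γmax : ℝ} {C : Finset (Finset V)}

lemma pottsEnergy_sub (x' x : V → L) :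
    pottsEnergy θ γ γmax C x' - pottsEnergy θ γ γmax C x =
      ∑ i, (θ i (x' i) - θ i (x i)) +
        ∑ c ∈ C, (pottsPot γ γmax c x' - pottsPot γ γmax c x) := by
  simp only [pottsEnergy, Finset.sum_sub_distrib, add_sub_add_comm]

lemma sum_pottsEnergy_expandToward_sub_le [DecidableEq L] (hC : ∀ c ∈ C, c.Nonempty)
    (hγ₀ : ∀ l, 0 ≤ γ l) (hγ : ∀ l, γ l ≤ γmax) (x y : V → L) :
    ∑ a ∈ Finset.univ.image y,
        (pottsEnergy θ γ γmax C (expandToward x y a) - pottsEnergy θ γ γmax C x) ≤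
      ∑ i, θ i (y i) + ∑ c ∈ C, (c.image y).card * pottsPot γ γmax c y -
        pottsEnergy θ γ γmax C x := by
  simp only [pottsEnergy_sub, Finset.sum_add_distrib]
  rw [Finset.sum_comm, Finset.sum_comm (t := C), pottsEnergy, add_sub_add_comm,
    ← Finset.sum_sub_distrib, ← Finset.sum_sub_distrib]
  gcongr with i _ c hc
  · exact (sum_expandToward_sub (θ i) (Finset.mem_image_of_mem y (Finset.mem_univ i))).le
  · exact sum_pottsPot_expandToward_sub_le hγ₀ hγ (hC c hc)
      (Finset.image_subset_image (Finset.subset_univ c))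

theorem alphaExpansion_pnPotts_multiplicative_bound_general [DecidableEq L]
    (hC : ∀ c ∈ C, c.Nonempty) (hγ₀ : ∀ l, 0 ≤ γ l) (hγ : ∀ l, γ l ≤ γmax) {xhat : V → L}
    (hlocal : ∀ α : L, ∀ x' : V → L, (∀ i, x' i = xhat i ∨ x' i = α) →
      pottsEnergy θ γ γmax C xhat ≤ pottsEnergy θ γ γmax C x')
    (xstar : V → L) :
    pottsEnergy θ γ γmax C xhat ≤
      ∑ i, θ i (xstar i) + ∑ c ∈ C, (c.image xstar).card * pottsPot γ γmax c xstar :=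
  have hmoves : 0 ≤ ∑ a ∈ Finset.univ.image xstar,
      (pottsEnergy θ γ γmax C (expandToward xhat xstar a) - pottsEnergy θ γ γmax C xhat) :=
    Finset.sum_nonneg fun a _ ↦ sub_nonneg.2 (hlocal a _ (expandToward_eq_or_eq xhat xstar a))
  sub_nonneg.1 (hmoves.trans (sum_pottsEnergy_expandToward_sub_le hC hγ₀ hγ xhat xstar))

end Energy

lemma sum_card_image_mul_le {α β R : Type*} [DecidableEq β] [Fintype β] [Semiring R]
    [PartialOrder R] [IsOrderedRing R] (f : α → β) {C : Finset (Finset α)} {w : Finset α → R}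
    (hw : ∀ c ∈ C, 0 ≤ w c) :
    ∑ c ∈ C, (c.image f).card * w c ≤
      (min (C.sup Finset.card) (Fintype.card β) : ℕ) * ∑ c ∈ C, w c := by
  rw [Finset.mul_sum]
  gcongr with c hc
  · exact hw c hc
  · exact le_min (Finset.card_image_le.trans (Finset.le_sup (f := Finset.card) hc))
      (Finset.card_le_univ _)

lemma one_le_div_inf' {ι K : Type*} [Field K] [LinearOrder K] [IsStrictOrderedRing K]
    {s : Finset ι} (hs : s.Nonempty) {f : ι → K} {b : K} (hpos : ∀ i ∈ s, 0 < f i)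
    (hle : ∀ i ∈ s, f i ≤ b) : 1 ≤ b / s.inf' hs f := by
  obtain ⟨i, hi, hmin⟩ := s.exists_mem_eq_inf' hs f
  rw [hmin, one_le_div (hpos i hi)]
  exact hle i hi

/-- multiplicative bound of `α`-expansion for the `Pⁿ` Potts model.
If `xhat` is a local optimum with respect to expansion moves, then for every
labeling `xstar`, the energy of `xhat` is at most the unary energy of `xstar` plus
`λ · min(M, |L|)` times the clique energy of `xstar`, where `M` is the size of
the largest clique, `γmin = min_l γ l` and `λ = γmax / γmin`. -/
theorem alphaExpansion_pnPotts_multiplicative_bound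
    {V L : Type*} [Fintype V] [Fintype L] [Nonempty V] [Nonempty L]
    (θ : V → L → ℝ) (C : Finset (Finset V)) (hC : ∀ c ∈ C, c.Nonempty)
    (γ : L → ℝ) (γmax : ℝ) (hγpos : ∀ l, 0 < γ l) (hγlt : ∀ l, γ l < γmax)
    (xhat : V → L)
    (hlocal : ∀ α : L, ∀ x' : V → L, (∀ i, x' i = xhat i ∨ x' i = α) →
      pottsEnergy θ γ γmax C xhat ≤ pottsEnergy θ γ γmax C x')
    (xstar : V → L) :
    ∑ i, θ i (xhat i) + ∑ c ∈ C, pottsPot γ γmax c xhat ≤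
      ∑ i, θ i (xstar i) +
        (γmax / Finset.univ.inf' Finset.univ_nonempty γ) *
          ((min (C.sup Finset.card) (Fintype.card L) : ℕ) : ℝ) *
          ∑ c ∈ C, pottsPot γ γmax c xstar := by
  classical
  have hγ₀ : ∀ l, 0 ≤ γ l := fun l ↦ (hγpos l).le
  have hγ : ∀ l, γ l ≤ γmax := fun l ↦ (hγlt l).le
  have hpot : ∀ c ∈ C, 0 ≤ pottsPot γ γmax c xstar := fun c hc ↦ pottsPot_nonneg hγ₀ hγ (hC c hc)
  have hlam : 1 ≤ γmax / Finset.univ.inf' Finset.univ_nonempty γ :=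
    one_le_div_inf' _ (fun l _ ↦ hγpos l) fun l _ ↦ hγ l
  refine (alphaExpansion_pnPotts_multiplicative_bound_general hC hγ₀ hγ hlocal xstar).trans ?_
  rw [mul_assoc]
  gcongr
  exact (sum_card_image_mul_le xstar hpot).trans
    (le_mul_of_one_le_left (mul_nonneg (Nat.cast_nonneg _) (Finset.sum_nonneg hpot)) hlam)
end

section
/- Let V be a finite set of variables, L a finite nonempty label set, θ : V → L → ℝ unary potentials, C a finite family of nonempty finite subsets of V (cliques), and w : C → ℝ nonnegative clique weights. Let δ be a diversity on L with diameter diversity δ^dia(Γ) = max_{i,j ∈ Γ} δ({i,j}). For a labeling x : V → L write Γ(x_c) = x(c) for the set of labels assigned to clique c. Then for every labeling x: Σ_{i} θ(i, x(i)) + Σ_{c ∈ C} w(c)·δ^dia(Γ(x_c)) ≤ Σ_{i} θ(i, x(i)) + Σ_{c ∈ C} w(c)·δ(Γ(x_c)) ≤ Σ_{i} θ(i, x(i)) + (|L| − 1) · Σ_{c ∈ C} w(c)·δ^dia(Γ(x_c)). -/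
/-!
Cover `Γ` by the star of pairs `{a, b}`, `b ∈ Γ \ {a}`, around one of its labels `a`. The triangle
inequality through `{a}` bounds `δ Γ` by the sum of the `|Γ| - 1` values `δ {a, b}`, each of which
is at most `δᵈⁱᵃ Γ`. Conversely, monotonicity gives `δᵈⁱᵃ Γ ≤ δ Γ`. Both bounds are then summed over
the cliques.
-/

namespace Diversity

variable {L : Type*} [DecidableEq L] (D : Diversity L)

theorem δ_insert_le_sum_δ_pair (a : L) (Γ : Finset L) :
    D.δ (insert a Γ) ≤ ∑ b ∈ Γ, D.δ {a, b} := by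
  induction Γ using Finset.induction_on with
  | empty => exact ((D.eq_zero_iff {a}).2 (Finset.card_singleton a).le).le
  | insert b Γ hb ih =>
    have triangle_through_a : D.δ (insert a (insert b Γ)) ≤ D.δ {a, b} + D.δ (insert a Γ) := by
      convert D.triangle {a, b} {a} Γ (Finset.singleton_nonempty a) using 3 <;> grind
    calc D.δ (insert a (insert b Γ))
        ≤ D.δ {a, b} + D.δ (insert a Γ) := triangle_through_a
      _ ≤ D.δ {a, b} + ∑ c ∈ Γ, D.δ {a, c} := by gcongr
      _ = ∑ c ∈ insert b Γ, D.δ {a, c} := by rw [Finset.sum_insert hb]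

theorem diaDiversity_empty : diaDiversity D ∅ = 0 :=
  dif_neg Finset.not_nonempty_empty

theorem δ_pair_le_diaDiversity_s11 {Γ : Finset L} {a b : L} (ha : a ∈ Γ) (hb : b ∈ Γ) :
    D.δ {a, b} ≤ diaDiversity D Γ := by
  rw [diaDiversity, dif_pos ⟨a, ha⟩]
  exact Finset.le_sup' (fun p : L × L => D.δ {p.1, p.2}) (Finset.mk_mem_product ha hb)

theorem diaDiversity_nonneg (Γ : Finset L) : 0 ≤ diaDiversity D Γ := by
  rcases Γ.eq_empty_or_nonempty with rfl | ⟨a, ha⟩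
  · exact D.diaDiversity_empty.ge
  · exact (D.nonneg {a, a}).trans (D.δ_pair_le_diaDiversity_s11 ha ha)

theorem diaDiversity_le_δ (Γ : Finset L) : diaDiversity D Γ ≤ D.δ Γ := by
  rw [diaDiversity]
  split_ifs
  · refine Finset.sup'_le _ _ fun p hp => D.mono ?_
    rw [Finset.mem_product] at hp
    exact Finset.insert_subset hp.1 (Finset.singleton_subset_iff.2 hp.2)
  · exact D.nonneg Γ

theorem δ_le_card_sub_one_mul_diaDiversity (Γ : Finset L) :
    D.δ Γ ≤ ((Γ.card : ℝ) - 1) * diaDiversity D Γ := by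
  rcases Γ.eq_empty_or_nonempty with rfl | ⟨a, ha⟩
  · have δ_empty : D.δ ∅ = 0 := (D.eq_zero_iff ∅).2 zero_le_one
    rw [δ_empty, D.diaDiversity_empty, mul_zero]
  · calc D.δ Γ = D.δ (insert a (Γ.erase a)) := by rw [Finset.insert_erase ha]
      _ ≤ ∑ b ∈ Γ.erase a, D.δ {a, b} := D.δ_insert_le_sum_δ_pair a (Γ.erase a)
      _ ≤ (Γ.erase a).card • diaDiversity D Γ :=
        Finset.sum_le_card_nsmul _ _ _ fun b hb =>
          D.δ_pair_le_diaDiversity_s11 ha (Finset.mem_of_mem_erase hb)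
      _ = ((Γ.card : ℝ) - 1) * diaDiversity D Γ := by
        rw [nsmul_eq_mul, Finset.cast_card_erase_of_mem ha]

theorem δ_le_sub_one_mul_diaDiversity_of_card_le {Γ : Finset L} {k : ℕ} (hk : Γ.card ≤ k) :
    D.δ Γ ≤ ((k : ℝ) - 1) * diaDiversity D Γ := by
  have := D.diaDiversity_nonneg Γ
  exact (D.δ_le_card_sub_one_mul_diaDiversity Γ).trans (by gcongr)

end Diversity

theorem parsimonious_energy_sandwich_general {V L : Type*} [Fintype V] [DecidableEq L]
    (θ : V → L → ℝ) (C : Finset (Finset V)) (w : Finset V → ℝ) (hw : ∀ c ∈ C, 0 ≤ w c)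
    (D : Diversity L) (x : V → L) {k : ℕ} (hk : ∀ c ∈ C, (c.image x).card ≤ k) :
    (∑ i, θ i (x i) + ∑ c ∈ C, w c * diaDiversity D (c.image x) ≤
      ∑ i, θ i (x i) + ∑ c ∈ C, w c * D.δ (c.image x)) ∧
    (∑ i, θ i (x i) + ∑ c ∈ C, w c * D.δ (c.image x) ≤
      ∑ i, θ i (x i) + ((k : ℝ) - 1) * ∑ c ∈ C, w c * diaDiversity D (c.image x)) := by
  simp_rw [Finset.mul_sum, mul_left_comm ((k : ℝ) - 1)]
  constructor <;> gcongr with c hc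
  · exact hw c hc
  · exact D.diaDiversity_le_δ (c.image x)
  · exact hw c hc
  · exact D.δ_le_sub_one_mul_diaDiversity_of_card_le (hk c hc)

/-- sandwiching the parsimonious labeling energy between diameter
diversity energies.  For any labeling `x`, the energy with diameter diversity
clique potentials lower-bounds the energy with diversity clique potentials,
which in turn is at most the unary energy plus `(|L| - 1)` times the diameter
diversity clique energy. -/
theorem parsimonious_energy_sandwich {V L : Type*} [Fintype V] [Fintype L]
    [Nonempty L] [DecidableEq L]
    (θ : V → L → ℝ) (C : Finset (Finset V)) (hC : ∀ c ∈ C, c.Nonempty)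
    (w : Finset V → ℝ) (hw : ∀ c ∈ C, 0 ≤ w c)
    (D : Diversity L) (x : V → L) :
    (∑ i, θ i (x i) + ∑ c ∈ C, w c * diaDiversity D (c.image x) ≤
      ∑ i, θ i (x i) + ∑ c ∈ C, w c * D.δ (c.image x)) ∧
    (∑ i, θ i (x i) + ∑ c ∈ C, w c * D.δ (c.image x) ≤
      ∑ i, θ i (x i) +
        ((Fintype.card L : ℝ) - 1) * ∑ c ∈ C, w c * diaDiversity D (c.image x)) := by
  exact parsimonious_energy_sandwich_general θ C w hw D x fun c _ => (c.image x).card_le_univ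
end
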